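/- Let h : 𝕋 → 𝕋 be a bi-Lipschitz orientation-preserving circle homeomorphism with irrational rotation number and unique invariant measure μ. Suppose that μ-almost everywhere, the upper and lower Dini derivatives of h agree ((h)'_+ = (h)'_− μ-a.e., i.e. h is C¹-regular μ-a.e.). Then (1/n) log((hⁿ)'_+(θ)) → 0 and (1/n) log((hⁿ)'_−(θ)) → 0 as n → ∞, uniformly in θ ∈ 𝕋. -/

import Mathlib

open Filter MeasureTheory

/-- Upper Dini-type derivative: `limsup` of difference quotients over pairs of
distinct points converging to `x`. -/
noncomputable def diniSup (H : ℝ → ℝ) (x : ℝ) : ℝ :=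
  Filter.limsup (fun p : ℝ × ℝ => (H p.1 - H p.2) / (p.1 - p.2))
    ((nhds (x, x)) ⊓ Filter.principal {p : ℝ × ℝ | p.1 ≠ p.2})

/-- Lower Dini-type derivative: the corresponding `liminf`. -/
noncomputable def diniInf (H : ℝ → ℝ) (x : ℝ) : ℝ :=
  Filter.liminf (fun p : ℝ × ℝ => (H p.1 - H p.2) / (p.1 - p.2))
    ((nhds (x, x)) ⊓ Filter.principal {p : ℝ × ℝ | p.1 ≠ p.2})

lemma rot_shift_one (ρ x : ℝ) (n : ℕ) :
    |∑ k ∈ Finset.range n, Int.fract (x + ρ + k * ρ) -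
      ∑ k ∈ Finset.range n, Int.fract (x + k * ρ)| ≤ 1 := by
  have h : ∑ k ∈ Finset.range n, Int.fract (x + ρ + k * ρ) -
      ∑ k ∈ Finset.range n, Int.fract (x + k * ρ) = Int.fract (x + n * ρ) - Int.fract x := by
    have := Finset.sum_range_sub (fun k : ℕ => Int.fract (x + k * ρ)) n
    rw [← Finset.sum_sub_distrib]
    simp only [Nat.cast_zero, zero_mul, add_zero] at this
    rw [← this]
    refine Finset.sum_congr rfl fun k _ => ?_
    push_cast
    congr 2
    ring
  rw [h, abs_le]
  have h1 := Int.fract_nonneg (x + n * ρ)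
  have h2 := Int.fract_nonneg x
  have h3 := Int.fract_lt_one (x + n * ρ)
  have h4 := Int.fract_lt_one x
  constructor <;> linarith

lemma rot_shift_nat (ρ : ℝ) (n j : ℕ) (x : ℝ) :
    |∑ k ∈ Finset.range n, Int.fract (x + j * ρ + k * ρ) -
      ∑ k ∈ Finset.range n, Int.fract (x + k * ρ)| ≤ j := by
  induction j with
  | zero => simp
  | succ j ih =>
    have h := rot_shift_one ρ (x + j * ρ) n
    have e : x + ((j + 1 : ℕ) : ℝ) * ρ = x + j * ρ + ρ := by push_cast; ring
    rw [e]
    push_cast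
    rw [abs_le] at *
    constructor <;> linarith [h.1, h.2, ih.1, ih.2]

lemma rot_shift_int (ρ : ℝ) (n : ℕ) (j : ℤ) (x : ℝ) :
    |∑ k ∈ Finset.range n, Int.fract (x + j * ρ + k * ρ) -
      ∑ k ∈ Finset.range n, Int.fract (x + k * ρ)| ≤ |(j : ℝ)| := by
  obtain ⟨m, rfl | rfl⟩ := j.eq_nat_or_neg
  · have := rot_shift_nat ρ n m x
    simpa using this
  · have := rot_shift_nat ρ n m (x + (-(m : ℤ) : ℤ) * ρ)
    rw [abs_sub_comm]
    simpa using this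

lemma fract_add_le_of_nonneg (x d : ℝ) (hd : 0 ≤ d) : Int.fract (x + d) ≤ Int.fract x + d := by
  have h : ((⌊x⌋ : ℤ) : ℝ) ≤ ⌊x + d⌋ := by
    exact_mod_cast Int.floor_mono (by linarith)
  unfold Int.fract
  linarith

lemma rot_unif (ρ : ℝ) (hirr : Irrational ρ) (ε : ℝ) (hε : 0 < ε) :
    ∃ J : ℝ, ∀ (n : ℕ) (x y : ℝ), ∑ k ∈ Finset.range n, Int.fract (y + k * ρ) ≤
      ∑ k ∈ Finset.range n, Int.fract (x + k * ρ) + J + n * ε := by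
  obtain ⟨N, hN⟩ := exists_nat_gt (2 / ε)
  have hN0 : (0 : ℝ) < N := lt_trans (by positivity) hN
  have hd : Dense (AddSubgroup.closure {ρ, (1 : ℝ)} : Set ℝ) :=
    dense_addSubgroupClosure_pair_iff.2 (by simpa using hirr)
  have key : ∀ i : ℕ, ∃ j m : ℤ, ((i : ℝ) - 1) / N < j * ρ + m ∧ j * ρ + m < (i : ℝ) / N := by
    intro i
    have hlt : ((i : ℝ) - 1) / N < (i : ℝ) / N := by
      apply div_lt_div_of_pos_right _ hN0; linarith
    obtain ⟨z, hz, hz1, hz2⟩ := hd.exists_between hlt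
    obtain ⟨j, m, rfl⟩ := AddSubgroup.mem_closure_pair.1 hz
    simp only [zsmul_eq_mul, mul_one] at hz1 hz2
    exact ⟨j, m, hz1, hz2⟩
  choose j m h1 h2 using key
  refine ⟨∑ i ∈ Finset.range N, |(j i : ℝ)|, fun n x y => ?_⟩
  set z := Int.fract (y - x) with hz
  have hz0 : 0 ≤ z := Int.fract_nonneg _
  have hz1 : z < 1 := Int.fract_lt_one _
  set i := ⌊z * N⌋₊ with hi
  have hi1 : (i : ℝ) ≤ z * N := Nat.floor_le (by positivity)
  have hi2 : z * N < i + 1 := Nat.lt_floor_add_one _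
  have hiN : i < N := by
    have : (i : ℝ) < N := by nlinarith
    exact_mod_cast this
  set d := z - (j i * ρ + m i) with hdd
  have hd0 : 0 ≤ d := by
    have : (i : ℝ) / N ≤ z := by rw [div_le_iff₀ hN0]; exact hi1
    linarith [h2 i]
  have hdε : d ≤ ε := by
    have a1 : z < ((i : ℝ) + 1) / N := by rw [lt_div_iff₀ hN0]; exact hi2
    have a2 : ((i : ℝ) + 1) / N - ((i : ℝ) - 1) / N = 2 / N := by field_simp; ring
    have a3 : 2 / N < ε := by
      rw [div_lt_iff₀ hN0]; rw [div_lt_iff₀ hε] at hN; linarith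
    linarith [h1 i]
  have hy : ∀ k : ℕ, Int.fract (y + k * ρ) ≤ Int.fract (x + j i * ρ + k * ρ) + ε := by
    intro k
    have e : y + k * ρ = (x + j i * ρ + k * ρ) + d + ((m i + ⌊y - x⌋ : ℤ) : ℝ) := by
      have := Int.floor_add_fract (y - x)
      push_cast
      rw [← hz] at this
      linarith
    rw [e, Int.fract_add_intCast]
    exact (fract_add_le_of_nonneg _ _ hd0).trans (by linarith)
  have hs := (abs_le.1 (rot_shift_int ρ n (j i) x)).2
  have hJ : |(j i : ℝ)| ≤ ∑ i ∈ Finset.range N, |(j i : ℝ)| :=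
    Finset.single_le_sum (f := fun i => |(j i : ℝ)|) (fun _ _ => abs_nonneg _)
      (Finset.mem_range.2 hiN)
  have hsum := Finset.sum_le_sum (s := Finset.range n) (fun k _ => hy k)
  rw [Finset.sum_add_distrib] at hsum
  simp only [Finset.sum_const, Finset.card_range, nsmul_eq_mul] at hsum
  linarith

/-- The number of visits to fundamental-domain intervals. -/
lemma visits (H F : ℝ → ℝ) (ρ : ℝ) (hirr : Irrational ρ) (hF : Monotone F)
    (hF1 : ∀ (t : ℝ) (m : ℤ), F (t + m) = F t + m) (hFH : ∀ t, F (H t) = F t + ρ)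
    (ε : ℝ) (hε : 0 < ε) :
    ∃ J : ℝ, ∀ (n : ℕ) (θ a b : ℝ),
      |∑ k ∈ Finset.range n, ((⌊H^[k] θ - a⌋ : ℝ) - ⌊H^[k] θ - b⌋) - n * (F b - F a)| ≤
        J + n * ε := by
  obtain ⟨J, hJ⟩ := rot_unif ρ hirr ε hε
  have hk : ∀ (k : ℕ) θ, F (H^[k] θ) = F θ + k * ρ := by
    intro k θ
    induction k with
    | zero => simp
    | succ k ih => rw [Function.iterate_succ_apply', hFH, ih]; push_cast; ring
  have hcmp : ∀ (n : ℕ) (θ a : ℝ),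
      0 ≤ ∑ k ∈ Finset.range n, (((⌊F θ - F a + k * ρ⌋ : ℤ) : ℝ) - ⌊H^[k] θ - a⌋) ∧
      ∑ k ∈ Finset.range n, (((⌊F θ - F a + k * ρ⌋ : ℤ) : ℝ) - ⌊H^[k] θ - a⌋) ≤ 1 := by
    intro n θ a
    classical
    set P : ℕ → Prop := fun k => ∃ m : ℤ, F θ - F a + k * ρ = m with hP
    have hterm : ∀ k : ℕ, 0 ≤ (((⌊F θ - F a + k * ρ⌋ : ℤ) : ℝ) - ⌊H^[k] θ - a⌋) ∧
        (((⌊F θ - F a + k * ρ⌋ : ℤ) : ℝ) - ⌊H^[k] θ - a⌋) ≤ if P k then 1 else 0 := by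
      intro k
      set y := H^[k] θ
      have b1 := Int.floor_le (y - a)
      have b2 := Int.lt_floor_add_one (y - a)
      set m := ⌊y - a⌋
      have c1 : F a + m ≤ F y := by rw [← hF1]; exact hF (by linarith)
      have c2 : F y ≤ F a + m + 1 := by
        have := hF1 a (m + 1)
        push_cast at this
        rw [add_assoc, ← this]; exact hF (by linarith)
      rw [hk] at c1 c2
      constructor
      · have : m ≤ ⌊F θ - F a + k * ρ⌋ := Int.le_floor.2 (by linarith)
        have : (m : ℝ) ≤ ⌊F θ - F a + k * ρ⌋ := by exact_mod_cast this
        linarith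
      · split_ifs with h
        · have : (⌊F θ - F a + k * ρ⌋ : ℝ) ≤ F θ - F a + k * ρ := Int.floor_le _
          linarith
        · have hne : F θ - F a + k * ρ ≠ ((m + 1 : ℤ) : ℝ) := fun h' => h ⟨_, h'⟩
          have hlt : F θ - F a + k * ρ < ((m + 1 : ℤ) : ℝ) := by
            refine lt_of_le_of_ne ?_ hne
            push_cast; linarith
          have : ⌊F θ - F a + k * ρ⌋ < m + 1 := Int.floor_lt.2 hlt
          have : ⌊F θ - F a + k * ρ⌋ ≤ m := by omega
          have : (⌊F θ - F a + k * ρ⌋ : ℝ) ≤ m := by exact_mod_cast this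
          linarith
    refine ⟨Finset.sum_nonneg fun k _ => (hterm k).1, ?_⟩
    refine (Finset.sum_le_sum fun k _ => (hterm k).2).trans ?_
    rw [Finset.sum_boole]
    have : (Finset.filter P (Finset.range n)).card ≤ 1 := by
      rw [Finset.card_le_one]
      intro k hk l hl
      obtain ⟨m, hm⟩ := (Finset.mem_filter.1 hk).2
      obtain ⟨m', hm'⟩ := (Finset.mem_filter.1 hl).2
      by_contra hne
      have hne' : ((k : ℤ) - l) ≠ 0 := by omega
      have e : (((k : ℤ) - l : ℤ) : ℝ) * ρ = ((m - m' : ℤ) : ℝ) := by push_cast; linarith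
      exact (hirr.intCast_mul hne').ne_int _ e
    exact_mod_cast this
  refine ⟨J + 1, fun n θ a b => ?_⟩
  have ha := hcmp n θ a
  have hb := hcmp n θ b
  have hab := hJ n (F θ - F a) (F θ - F b)
  have hba := hJ n (F θ - F b) (F θ - F a)
  simp only [Finset.sum_sub_distrib] at ha hb ⊢
  have hfl : ∀ c : ℝ, ∑ k ∈ Finset.range n, ((⌊F θ - F c + k * ρ⌋ : ℤ) : ℝ) =
      n * (F θ - F c) + ∑ k ∈ Finset.range n, (k * ρ) -
        ∑ k ∈ Finset.range n, Int.fract (F θ - F c + k * ρ) := by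
    intro c
    have : ∀ k : ℕ, ((⌊F θ - F c + k * ρ⌋ : ℤ) : ℝ) =
        ((F θ - F c) + k * ρ) - Int.fract (F θ - F c + k * ρ) := fun k => by
      unfold Int.fract; ring
    simp only [this, Finset.sum_sub_distrib, Finset.sum_add_distrib]
    simp
    ring
  rw [hfl] at ha hb
  rw [abs_le]
  constructor <;> linarith [ha.1, ha.2, hb.1, hb.2]

section dini

lemma quot_filter_neBot (x : ℝ) :
    ((nhds (x, x)) ⊓ Filter.principal {p : ℝ × ℝ | p.1 ≠ p.2}).NeBot := by
  have : Tendsto (fun z : ℝ => (z, x)) (nhdsWithin x (Set.Ioi x))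
      ((nhds (x, x)) ⊓ Filter.principal {p : ℝ × ℝ | p.1 ≠ p.2}) := by
    rw [tendsto_inf]
    constructor
    · have : Continuous (fun z : ℝ => (z, x)) := by fun_prop
      exact (this.tendsto x).mono_left nhdsWithin_le_nhds
    · rw [tendsto_principal]
      filter_upwards [self_mem_nhdsWithin] with z hz
      exact ne_of_gt hz
  exact this.neBot

/-- Two-sided bound on difference quotients. -/
def QB (m M : ℝ) (G : ℝ → ℝ) : Prop :=
  ∀ p : ℝ × ℝ, p.1 ≠ p.2 →
    m ≤ (G p.1 - G p.2) / (p.1 - p.2) ∧ (G p.1 - G p.2) / (p.1 - p.2) ≤ M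

lemma ev_quot {P : ℝ × ℝ → Prop} (x : ℝ) :
    (∀ᶠ p in ((nhds (x, x)) ⊓ Filter.principal {p : ℝ × ℝ | p.1 ≠ p.2}), P p) ↔
    ∃ δ > 0, ∀ y z, |y - x| < δ → |z - x| < δ → y ≠ z → P (y, z) := by
  rw [eventually_inf_principal, Metric.eventually_nhds_iff]
  constructor
  · rintro ⟨δ, hδ, h⟩
    refine ⟨δ, hδ, fun y z hy hz hne => h ?_ hne⟩
    rw [Prod.dist_eq]
    exact max_lt hy hz
  · rintro ⟨δ, hδ, h⟩
    refine ⟨δ, hδ, fun p hp hne => h p.1 p.2 ?_ ?_ hne⟩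
    · rw [Prod.dist_eq] at hp
      exact lt_of_le_of_lt (le_max_left _ _) hp
    · rw [Prod.dist_eq] at hp
      exact lt_of_le_of_lt (le_max_right _ _) hp

variable {G : ℝ → ℝ} {m M : ℝ}

lemma QB.bddLe (h : QB m M G) (x : ℝ) :
    ((nhds (x, x)) ⊓ Filter.principal {p : ℝ × ℝ | p.1 ≠ p.2}).IsBoundedUnder (· ≤ ·)
      (fun p : ℝ × ℝ => (G p.1 - G p.2) / (p.1 - p.2)) :=
  ⟨M, by
    rw [eventually_map, eventually_inf_principal]
    exact Eventually.of_forall fun p hp => (h p hp).2⟩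

lemma QB.bddGe (h : QB m M G) (x : ℝ) :
    ((nhds (x, x)) ⊓ Filter.principal {p : ℝ × ℝ | p.1 ≠ p.2}).IsBoundedUnder (· ≥ ·)
      (fun p : ℝ × ℝ => (G p.1 - G p.2) / (p.1 - p.2)) :=
  ⟨m, by
    rw [eventually_map, eventually_inf_principal]
    exact Eventually.of_forall fun p hp => (h p hp).1⟩

lemma QB.lt_of_sup (h : QB m M G) {x c : ℝ} (hc : diniSup G x < c) :
    ∃ δ > 0, ∀ y z, |y - x| < δ → |z - x| < δ → y ≠ z → (G y - G z) / (y - z) < c :=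
  (ev_quot x).1 (eventually_lt_of_limsup_lt hc (h.bddLe x))

lemma QB.lt_of_inf (h : QB m M G) {x c : ℝ} (hc : c < diniInf G x) :
    ∃ δ > 0, ∀ y z, |y - x| < δ → |z - x| < δ → y ≠ z → c < (G y - G z) / (y - z) :=
  (ev_quot x).1 (eventually_lt_of_lt_liminf hc (h.bddGe x))

lemma QB.sup_le (h : QB m M G) {x c δ : ℝ} (hδ : 0 < δ)
    (hc : ∀ y z, |y - x| < δ → |z - x| < δ → y ≠ z → (G y - G z) / (y - z) ≤ c) :
    diniSup G x ≤ c :=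
  haveI := quot_filter_neBot x
  limsup_le_of_le (h.bddGe x).isCoboundedUnder_le ((ev_quot x).2 ⟨δ, hδ, hc⟩)

lemma QB.le_inf (h : QB m M G) {x c δ : ℝ} (hδ : 0 < δ)
    (hc : ∀ y z, |y - x| < δ → |z - x| < δ → y ≠ z → c ≤ (G y - G z) / (y - z)) :
    c ≤ diniInf G x :=
  haveI := quot_filter_neBot x
  le_liminf_of_le (h.bddLe x).isCoboundedUnder_ge ((ev_quot x).2 ⟨δ, hδ, hc⟩)

lemma QB.inf_le_sup (h : QB m M G) (x : ℝ) : diniInf G x ≤ diniSup G x :=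
  haveI := quot_filter_neBot x
  liminf_le_limsup (h.bddLe x) (h.bddGe x)

lemma QB.le_inf' (h : QB m M G) (x : ℝ) : m ≤ diniInf G x :=
  h.le_inf one_pos fun y z _ _ hne => (h (y, z) hne).1

lemma QB.sup_le' (h : QB m M G) (x : ℝ) : diniSup G x ≤ M :=
  h.sup_le one_pos fun y z _ _ hne => (h (y, z) hne).2

lemma QB.sup_usc (h : QB m M G) {x c : ℝ} (hc : diniSup G x < c) :
    ∃ δ > 0, ∀ y, |y - x| < δ → diniSup G y ≤ c := by
  obtain ⟨δ, hδ, H⟩ := h.lt_of_sup hc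
  refine ⟨δ, hδ, fun w hw => h.sup_le (δ := δ - |w - x|) (by linarith) fun y z hy hz hne =>
    (H y z ?_ ?_ hne).le⟩
  · linarith [abs_sub_le y w x]
  · linarith [abs_sub_le z w x]

lemma QB.inf_lsc (h : QB m M G) {x c : ℝ} (hc : c < diniInf G x) :
    ∃ δ > 0, ∀ y, |y - x| < δ → c ≤ diniInf G y := by
  obtain ⟨δ, hδ, H⟩ := h.lt_of_inf hc
  refine ⟨δ, hδ, fun w hw => h.le_inf (δ := δ - |w - x|) (by linarith) fun y z hy hz hne =>
    (H y z ?_ ?_ hne).le⟩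
  · linarith [abs_sub_le y w x]
  · linarith [abs_sub_le z w x]

lemma QB.inj (h : QB m M G) (hm : 0 < m) {y z : ℝ} (hne : y ≠ z) : G y ≠ G z := by
  intro he
  have := (h (y, z) hne).1
  simp only [he, sub_self, zero_div] at this
  linarith

lemma QB.cont (h : QB m M G) (hm : 0 < m) : Continuous G := by
  have hM : 0 ≤ M := by
    have := h (1, 0) (by norm_num)
    linarith [this.1, this.2]
  refine (LipschitzWith.of_dist_le_mul (K := ⟨M, hM⟩) fun x y => ?_).continuous
  by_cases hxy : x = y
  · simp [hxy]
  · have := h (x, y) hxy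
    have hpos : 0 < |x - y| := abs_pos.2 (sub_ne_zero.2 hxy)
    rw [Real.dist_eq, Real.dist_eq]
    have h2 : |(G x - G y) / (x - y)| ≤ M := by
      rw [abs_of_nonneg (by linarith [this.1])]; exact this.2
    rw [abs_div, div_le_iff₀ hpos] at h2
    exact h2

variable {K : ℝ → ℝ} {m' M' : ℝ}

lemma quot_comp (h : QB m M G) (hm : 0 < m) {y z : ℝ} (hne : y ≠ z) :
    ((K ∘ G) y - (K ∘ G) z) / (y - z) =
      ((K (G y) - K (G z)) / (G y - G z)) * ((G y - G z) / (y - z)) := by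
  have h1 : G y - G z ≠ 0 := sub_ne_zero.2 (h.inj hm hne)
  have h2 : y - z ≠ 0 := sub_ne_zero.2 hne
  simp only [Function.comp]
  field_simp

lemma QB.comp (hK : QB m' M' K) (h : QB m M G) (hm : 0 < m) (hm' : 0 < m') :
    QB (m' * m) (M' * M) (K ∘ G) := by
  rintro ⟨y, z⟩ hne
  simp only at hne ⊢
  rw [quot_comp h hm hne]
  have h1 := h (y, z) hne
  have h2 := hK (G y, G z) (h.inj hm hne)
  simp only at h1 h2
  exact ⟨mul_le_mul h2.1 h1.1 hm.le (by linarith),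
    mul_le_mul h2.2 h1.2 (by linarith) (by linarith)⟩

lemma QB.sup_comp (hK : QB m' M' K) (h : QB m M G) (hm : 0 < m) (hm' : 0 < m') (x : ℝ) :
    diniSup (K ∘ G) x ≤ diniSup K (G x) * diniSup G x := by
  have hlim : Tendsto (fun e : ℝ => (diniSup K (G x) + e) * (diniSup G x + e))
      (nhdsWithin 0 (Set.Ioi 0)) (nhds (diniSup K (G x) * diniSup G x)) := by
    have : Continuous (fun e : ℝ => (diniSup K (G x) + e) * (diniSup G x + e)) := by fun_prop
    have := this.tendsto 0
    simp only [add_zero] at this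
    exact this.mono_left nhdsWithin_le_nhds
  refine ge_of_tendsto hlim ?_
  filter_upwards [self_mem_nhdsWithin] with e he
  rw [Set.mem_Ioi] at he
  obtain ⟨δ, hδ, h1⟩ := h.lt_of_sup (x := x) (c := diniSup G x + e) (by linarith)
  obtain ⟨η, hη, h2⟩ := hK.lt_of_sup (x := G x) (c := diniSup K (G x) + e) (by linarith)
  obtain ⟨δ', hδ', h3⟩ := Metric.continuous_iff.1 (h.cont hm) x η hη
  refine (hK.comp h hm hm').sup_le (lt_min hδ hδ') fun y z hy hz hne => ?_
  rw [quot_comp h hm hne]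
  have g1 := h1 y z (hy.trans_le (min_le_left _ _)) (hz.trans_le (min_le_left _ _)) hne
  have g2 := h2 (G y) (G z) (h3 y (hy.trans_le (min_le_right _ _)))
    (h3 z (hz.trans_le (min_le_right _ _))) (h.inj hm hne)
  have b1 := (h (y, z) hne).1
  have b2 := (hK (G y, G z) (h.inj hm hne)).1
  simp only at b1 b2
  exact mul_le_mul g2.le g1.le (by linarith) (by linarith)

lemma QB.inf_comp (hK : QB m' M' K) (h : QB m M G) (hm : 0 < m) (hm' : 0 < m') (x : ℝ) :
    diniInf K (G x) * diniInf G x ≤ diniInf (K ∘ G) x := by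
  have hlim : Tendsto (fun e : ℝ => (diniInf K (G x) - e) * (diniInf G x - e))
      (nhdsWithin 0 (Set.Ioi 0)) (nhds (diniInf K (G x) * diniInf G x)) := by
    have : Continuous (fun e : ℝ => (diniInf K (G x) - e) * (diniInf G x - e)) := by fun_prop
    have := this.tendsto 0
    simp only [sub_zero] at this
    exact this.mono_left nhdsWithin_le_nhds
  have p1 := h.le_inf' x
  have p2 := hK.le_inf' (G x)
  refine le_of_tendsto hlim ?_
  filter_upwards [self_mem_nhdsWithin,
    mem_nhdsWithin_of_mem_nhds (Iio_mem_nhds (lt_min hm hm'))] with e he he'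
  rw [Set.mem_Ioi] at he
  rw [Set.mem_Iio, lt_min_iff] at he'
  obtain ⟨δ, hδ, h1⟩ := h.lt_of_inf (x := x) (c := diniInf G x - e) (by linarith)
  obtain ⟨η, hη, h2⟩ := hK.lt_of_inf (x := G x) (c := diniInf K (G x) - e) (by linarith)
  obtain ⟨δ', hδ', h3⟩ := Metric.continuous_iff.1 (h.cont hm) x η hη
  refine (hK.comp h hm hm').le_inf (lt_min hδ hδ') fun y z hy hz hne => ?_
  rw [quot_comp h hm hne]
  have g1 := h1 y z (hy.trans_le (min_le_left _ _)) (hz.trans_le (min_le_left _ _)) hne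
  have g2 := h2 (G y) (G z) (h3 y (hy.trans_le (min_le_right _ _)))
    (h3 z (hz.trans_le (min_le_right _ _))) (h.inj hm hne)
  exact mul_le_mul g2.le g1.le (by linarith) (by linarith)

lemma QB.iter (h : QB m M G) (hm : 0 < m) (n : ℕ) : QB (m ^ n) (M ^ n) (G^[n]) := by
  induction n with
  | zero =>
    rintro ⟨y, z⟩ hne
    have h2 : y - z ≠ 0 := sub_ne_zero.2 hne
    simp [div_self h2]
  | succ n ih =>
    rw [Function.iterate_succ', pow_succ', pow_succ']
    exact h.comp ih (by positivity) hm

lemma QB.log_sup_iter (h : QB m M G) (hm : 0 < m) (n : ℕ) (x : ℝ) :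
    Real.log (diniSup (G^[n]) x) ≤ ∑ k ∈ Finset.range n, Real.log (diniSup G (G^[k] x)) := by
  induction n with
  | zero =>
    have h0 := h.iter hm 0
    have a := (h0.le_inf' x).trans (h0.inf_le_sup x)
    have b := h0.sup_le' x
    simp only [pow_zero] at a b
    rw [le_antisymm b a]
    simp
  | succ n ih =>
    have hn := h.iter hm n
    have p1 : 0 < diniSup (G^[n]) x :=
      lt_of_lt_of_le (pow_pos hm n) ((hn.le_inf' x).trans (hn.inf_le_sup x))
    have p2 : 0 < diniSup G (G^[n] x) :=
      lt_of_lt_of_le hm ((h.le_inf' _).trans (h.inf_le_sup _))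
    have hn' := h.iter hm (n + 1)
    have p3 : 0 < diniSup (G^[n + 1]) x :=
      lt_of_lt_of_le (pow_pos hm _) ((hn'.le_inf' x).trans (hn'.inf_le_sup x))
    have := h.sup_comp hn (pow_pos hm n) hm x
    rw [← Function.iterate_succ'] at this
    have := Real.log_le_log p3 this
    rw [Real.log_mul p2.ne' p1.ne'] at this
    rw [Finset.sum_range_succ]
    linarith

lemma QB.log_inf_iter (h : QB m M G) (hm : 0 < m) (n : ℕ) (x : ℝ) :
    ∑ k ∈ Finset.range n, Real.log (diniInf G (G^[k] x)) ≤ Real.log (diniInf (G^[n]) x) := by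
  induction n with
  | zero =>
    have h0 := h.iter hm 0
    have a := h0.le_inf' x
    have b := (h0.inf_le_sup x).trans (h0.sup_le' x)
    simp only [pow_zero] at a b
    rw [le_antisymm b a]
    simp
  | succ n ih =>
    have hn := h.iter hm n
    have p1 : 0 < diniInf (G^[n]) x := lt_of_lt_of_le (pow_pos hm n) (hn.le_inf' x)
    have p2 : 0 < diniInf G (G^[n] x) := lt_of_lt_of_le hm (h.le_inf' _)
    have := h.inf_comp hn (pow_pos hm n) hm x
    rw [← Function.iterate_succ'] at this
    have := Real.log_le_log (mul_pos p2 p1) this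
    rw [Real.log_mul p2.ne' p1.ne'] at this
    rw [Finset.sum_range_succ]
    linarith

/-- Global bound from a bound of the upper derivative. -/
lemma QB.global_sup (h : QB m M G) (hm : 0 < m) {c : ℝ} (hc : ∀ x, diniSup G x ≤ c) :
    G 1 - G 0 ≤ c := by
  have := image_le_of_liminf_slope_right_le_deriv_boundary (f := G) (a := 0) (b := 1)
    (h.cont hm).continuousOn (B := fun t => G 0 + c * t) (B' := fun _ => c) (by simp)
    (by fun_prop) (fun x _ => by
      have := ((hasDerivAt_id x).const_mul c).const_add (G 0)
      simpa using this.hasDerivWithinAt)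
    (fun x _ r hr => by
      obtain ⟨δ, hδ, hh⟩ := h.lt_of_sup (lt_of_le_of_lt (hc x) hr)
      apply Eventually.frequently
      have hmem : Set.Ioo x (x + δ) ∈ nhdsWithin x (Set.Ioi x) := Ioo_mem_nhdsGT (by linarith)
      filter_upwards [hmem] with z hz
      rw [slope_def_field]
      refine hh z x ?_ (by simpa using hδ) hz.1.ne'
      rw [abs_of_pos (by linarith [hz.1])]
      linarith [hz.2]) (x := 1) (by simp)
  linarith

lemma QB.global_inf (h : QB m M G) (hm : 0 < m) {c : ℝ} (hc : ∀ x, c ≤ diniInf G x) :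
    c ≤ G 1 - G 0 := by
  have := image_le_of_liminf_slope_right_le_deriv_boundary (f := fun t => -G t) (a := 0) (b := 1)
    (h.cont hm).neg.continuousOn (B := fun t => -G 0 + (-c) * t) (B' := fun _ => -c) (by simp)
    (by fun_prop) (fun x _ => by
      have := ((hasDerivAt_id x).const_mul (-c)).const_add (-G 0)
      simpa using this.hasDerivWithinAt)
    (fun x _ r hr => by
      have hr' : -r < c := by linarith
      obtain ⟨δ, hδ, hh⟩ := h.lt_of_inf (lt_of_lt_of_le hr' (hc x))
      apply Eventually.frequently
      have hmem : Set.Ioo x (x + δ) ∈ nhdsWithin x (Set.Ioi x) := Ioo_mem_nhdsGT (by linarith)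
      filter_upwards [hmem] with z hz
      rw [slope_def_field]
      have := hh z x (by
        rw [abs_of_pos (by linarith [hz.1])]
        linarith [hz.2]) (by simpa using hδ) hz.1.ne'
      have e : (-G z - -G x) / (z - x) = -((G z - G x) / (z - x)) := by ring
      rw [e]
      linarith) (x := 1) (by simp)
  linarith

lemma diniSup_periodic (hG : ∀ t, G (t + 1) = G t + 1) (h : QB m M G) (x : ℝ) :
    diniSup G (x + 1) = diniSup G x := by
  apply le_antisymm
  · refine le_of_forall_gt_imp_ge_of_dense fun c hc => ?_
    obtain ⟨δ, hδ, hh⟩ := h.lt_of_sup hc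
    refine h.sup_le hδ fun y z hy hz hne => ?_
    have := hh (y - 1) (z - 1) (by convert hy using 2; ring) (by convert hz using 2; ring)
      (by simpa using hne)
    have e1 := hG (y - 1)
    have e2 := hG (z - 1)
    rw [sub_add_cancel] at e1 e2
    rw [e1, e2]
    refine le_trans (le_of_eq ?_) this.le; ring
  · refine le_of_forall_gt_imp_ge_of_dense fun c hc => ?_
    obtain ⟨δ, hδ, hh⟩ := h.lt_of_sup hc
    refine h.sup_le hδ fun y z hy hz hne => ?_
    have := hh (y + 1) (z + 1) (by convert hy using 2; ring) (by convert hz using 2; ring)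
      (by simpa using hne)
    rw [hG, hG] at this
    refine le_trans (le_of_eq ?_) this.le; ring

lemma diniInf_periodic (hG : ∀ t, G (t + 1) = G t + 1) (h : QB m M G) (x : ℝ) :
    diniInf G (x + 1) = diniInf G x := by
  apply le_antisymm
  · refine le_of_forall_lt_imp_le_of_dense fun c hc => ?_
    obtain ⟨δ, hδ, hh⟩ := h.lt_of_inf hc
    refine h.le_inf hδ fun y z hy hz hne => ?_
    have := hh (y + 1) (z + 1) (by convert hy using 2; ring) (by convert hz using 2; ring)
      (by simpa using hne)
    rw [hG, hG] at this
    refine this.le.trans (le_of_eq ?_); ring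
  · refine le_of_forall_lt_imp_le_of_dense fun c hc => ?_
    obtain ⟨δ, hδ, hh⟩ := h.lt_of_inf hc
    refine h.le_inf hδ fun y z hy hz hne => ?_
    have := hh (y - 1) (z - 1) (by convert hy using 2; ring) (by convert hz using 2; ring)
      (by simpa using hne)
    have e1 := hG (y - 1)
    have e2 := hG (z - 1)
    rw [sub_add_cancel] at e1 e2
    rw [e1, e2]
    refine this.le.trans (le_of_eq ?_); ring

end dini

lemma floor_bound_integrable (μ : Measure ℝ) [IsProbabilityMeasure μ] (f : ℝ → ℝ)
    (hf : Measurable f) (C : ℝ) (hC : ∀ᵐ x ∂μ, |f x| ≤ C) :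
    Integrable (fun x => ((⌊f x⌋ : ℤ) : ℝ)) μ := by
  have hmeas : Measurable (fun x => ((⌊f x⌋ : ℤ) : ℝ)) :=
    (measurable_of_countable (fun z : ℤ => (z : ℝ))).comp hf.floor
  refine Integrable.of_bound hmeas.aestronglyMeasurable (C + 1) ?_
  filter_upwards [hC] with x hx
  rw [Real.norm_eq_abs]
  rw [abs_le] at *
  have h1 := Int.floor_le (f x)
  have h2 := Int.lt_floor_add_one (f x)
  constructor <;> linarith [hx.1, hx.2]

/-- The distribution function semiconjugates to the rotation. -/
lemma semiconj (H : ℝ → ℝ) (hmono : StrictMono H) (hcont : Continuous H)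
    (hlift : ∀ t, H (t + 1) = H t + 1)
    (ρ : ℝ) (hρ : ∀ t, Tendsto (fun n : ℕ => (H^[n] t - t) / n) atTop (nhds ρ))
    (μ : Measure ℝ) [IsProbabilityMeasure μ] (hsupp : μ (Set.Ico (0 : ℝ) 1) = 1)
    (hinvμ : ∀ A : Set ℝ, MeasurableSet A →
      μ ((fun t => Int.fract (H t)) ⁻¹' A) = μ A) :
    ∃ F : ℝ → ℝ, (∀ t, F t = -∫ x, ((⌊x - t⌋ : ℤ) : ℝ) ∂μ) ∧
      (∀ t, Integrable (fun x => ((⌊x - t⌋ : ℤ) : ℝ)) μ) ∧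
      Monotone F ∧ (∀ (t : ℝ) (m : ℤ), F (t + m) = F t + m) ∧ (∀ t, F (H t) = F t + ρ) := by
  have hae : ∀ᵐ x ∂μ, x ∈ Set.Ico (0 : ℝ) 1 := by
    rw [← prob_compl_eq_zero_iff measurableSet_Ico] at hsupp
    exact hsupp
  have hint : ∀ t, Integrable (fun x => ((⌊x - t⌋ : ℤ) : ℝ)) μ := by
    intro t
    refine floor_bound_integrable μ (fun x => x - t) (by fun_prop) (1 + |t|) ?_
    filter_upwards [hae] with x hx
    have h1 := abs_le.1 (le_refl |t|)
    rw [abs_le]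
    constructor <;> linarith [hx.1, hx.2, h1.1, h1.2]
  have hintH : Integrable (fun x => ((⌊H x⌋ : ℤ) : ℝ)) μ := by
    refine floor_bound_integrable μ H hcont.measurable (1 + |H 0|) ?_
    filter_upwards [hae] with x hx
    have h0 := hmono.monotone hx.1
    have h1 := hmono.monotone hx.2.le
    have h2 := hlift 0
    rw [zero_add] at h2
    have h3 := abs_le.1 (le_refl |H 0|)
    rw [abs_le]
    constructor <;> linarith [h3.1, h3.2]
  set F : ℝ → ℝ := fun t => -∫ x, ((⌊x - t⌋ : ℤ) : ℝ) ∂μ with hFdef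
  have hF : Monotone F := by
    intro s t hst
    simp only [hFdef]
    refine neg_le_neg (integral_mono (hint t) (hint s) fun x => ?_)
    have : ⌊x - t⌋ ≤ ⌊x - s⌋ := Int.floor_mono (by linarith)
    simp only
    exact_mod_cast this
  have hF1 : ∀ (t : ℝ) (m : ℤ), F (t + m) = F t + m := by
    intro t m
    have e : ∀ x : ℝ, ((⌊x - (t + m)⌋ : ℤ) : ℝ) = ⌊x - t⌋ - m := by
      intro x
      rw [← sub_sub, Int.floor_sub_intCast]
      push_cast; ring
    simp only [hFdef, e]
    rw [integral_sub (hint t) (integrable_const _)]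
    simp
    ring
  have hHint : ∀ (m : ℤ) t, H (t + m) = H t + m := by
    intro m
    induction m using Int.induction_on with
    | zero => simp
    | succ i ih =>
      intro t
      push_cast at ih ⊢
      rw [← add_assoc, hlift, ih]; ring
    | pred i ih =>
      intro t
      have h1 := hlift (t + ((-(i : ℤ) - 1 : ℤ) : ℝ))
      have h2 := ih t
      push_cast at h1 h2 ⊢
      have e : t + (-(i : ℝ) - 1) + 1 = t + -(i : ℝ) := by ring
      rw [e, h2] at h1
      linarith
  have hfl : ∀ x t, ⌊H x - H t⌋ = ⌊x - t⌋ := by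
    intro x t
    rw [Int.floor_eq_iff]
    have h1 := Int.floor_le (x - t)
    have h2 := Int.lt_floor_add_one (x - t)
    have a1 : H (t + ⌊x - t⌋) ≤ H x := hmono.monotone (by linarith)
    have a2 : H x < H (t + (⌊x - t⌋ + 1 : ℤ)) := hmono (by push_cast; linarith)
    rw [hHint] at a1 a2
    push_cast at a2
    constructor <;> linarith
  have hT : Measurable (fun t => Int.fract (H t)) := hcont.measurable.fract
  have hmap : μ.map (fun t => Int.fract (H t)) = μ := by
    ext A hA
    rw [Measure.map_apply hT hA, hinvμ A hA]
  set c := ∫ x, ((⌊H x⌋ : ℤ) : ℝ) ∂μ with hc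
  have hFH : ∀ t, F (H t) = F t + c := by
    intro t
    have e1 : ∫ x, ((⌊x - H t⌋ : ℤ) : ℝ) ∂μ =
        ∫ x, ((⌊Int.fract (H x) - H t⌋ : ℤ) : ℝ) ∂μ := by
      conv_lhs => rw [← hmap]
      rw [integral_map hT.aemeasurable]
      have : Measurable (fun x : ℝ => ((⌊x - H t⌋ : ℤ) : ℝ)) :=
        (measurable_of_countable (fun z : ℤ => (z : ℝ))).comp
          (measurable_id.sub_const (H t)).floor
      exact this.aestronglyMeasurable
    have e2 : ∀ x, ((⌊Int.fract (H x) - H t⌋ : ℤ) : ℝ) = ⌊x - t⌋ - ⌊H x⌋ := by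
      intro x
      have : Int.fract (H x) - H t = (H x - H t) - (⌊H x⌋ : ℤ) := by
        unfold Int.fract; ring
      rw [this, Int.floor_sub_intCast, hfl]
      push_cast; ring
    simp only [hFdef]
    rw [e1]
    simp only [e2]
    rw [integral_sub (hint t) hintH]
    ring
  have hFk : ∀ (n : ℕ), F (H^[n] 0) = F 0 + n * c := by
    intro n
    induction n with
    | zero => simp
    | succ k ih => rw [Function.iterate_succ_apply', hFH, ih]; push_cast; ring
  have hFb : ∀ t, |t - F t| ≤ |F 0| + 1 := by
    intro t
    have h1 := Int.floor_le t
    have h2 := Int.lt_floor_add_one t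
    have a1 := hF h1
    have a2 := hF h2.le
    have b1 := hF1 0 ⌊t⌋
    have b2 := hF1 0 (⌊t⌋ + 1)
    push_cast at b1 b2
    rw [zero_add] at b1 b2
    have h3 := abs_le.1 (le_refl |F 0|)
    rw [abs_le]
    constructor <;> linarith [h3.1, h3.2]
  have hlim : Tendsto (fun n : ℕ => (H^[n] 0 - 0) / n) atTop (nhds c) := by
    have hz : Tendsto (fun n : ℕ => (H^[n] 0 - 0) / n - c) atTop (nhds 0) := by
      refine squeeze_zero_norm' (a := fun n : ℕ => (2 * |F 0| + 1) / (n : ℝ)) ?_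
        (tendsto_const_div_atTop_nhds_zero_nat _)
      filter_upwards [eventually_gt_atTop 0] with n hn
      have hn' : (0 : ℝ) < n := by exact_mod_cast hn
      have e : (H^[n] 0 - 0) / n - c = (H^[n] 0 - F (H^[n] 0) + F 0) / n := by
        rw [hFk]; field_simp; ring
      rw [e, norm_div, Real.norm_eq_abs, Real.norm_eq_abs, abs_of_pos hn']
      apply div_le_div_of_nonneg_right _ hn'.le
      linarith [abs_add_le (H^[n] 0 - F (H^[n] 0)) (F 0), hFb (H^[n] 0)]
    simpa using hz.add_const c
  have hcρ : c = ρ := tendsto_nhds_unique hlim (hρ 0)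
  exact ⟨F, fun t => rfl, hint, hF, hF1, fun t => by rw [hFH, hcρ]⟩

/-- Uniform upper bound for Birkhoff sums of upper semicontinuous functions. -/
lemma birkhoff_usc (H F : ℝ → ℝ) (ρ : ℝ) (hirr : Irrational ρ)
    (μ : Measure ℝ) [IsProbabilityMeasure μ]
    (hFd : ∀ t, F t = -∫ x, ((⌊x - t⌋ : ℤ) : ℝ) ∂μ)
    (hint : ∀ t, Integrable (fun x => ((⌊x - t⌋ : ℤ) : ℝ)) μ)
    (hF : Monotone F)
    (hF1 : ∀ (t : ℝ) (m : ℤ), F (t + m) = F t + m) (hFH : ∀ t, F (H t) = F t + ρ)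
    (φ : ℝ → ℝ) (hper : ∀ x, φ (x + 1) = φ x) (C : ℝ) (hC : ∀ x, |φ x| ≤ C)
    (husc : ∀ x, ∀ ε > 0, ∃ δ > 0, ∀ y, |y - x| < δ → φ y ≤ φ x + ε)
    (ε : ℝ) (hε : 0 < ε) :
    ∃ N : ℕ, ∀ n ≥ N, ∀ θ, ∑ k ∈ Finset.range n, φ (H^[k] θ) ≤ n * (∫ x, φ x ∂μ + ε) := by
  have hfr : ∀ x, φ (Int.fract x) = φ x := by
    intro x
    have hp : Function.Periodic φ 1 := hper
    have := hp.sub_zsmul_eq (x := x) ⌊x⌋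
    simp only [zsmul_eq_mul, mul_one] at this
    exact this
  -- sup on the pieces
  set c : ℕ → ℕ → ℝ := fun N i => sSup (φ '' Set.Ico ((i : ℝ) / N) ((i + 1 : ℝ) / N)) with hcdef
  have hbdd : ∀ N i : ℕ, BddAbove (φ '' Set.Ico ((i : ℝ) / N) ((i + 1 : ℝ) / N)) := by
    intro N i
    refine ⟨C, ?_⟩
    rintro _ ⟨y, _, rfl⟩
    exact (abs_le.1 (hC y)).2
  set j : ℕ → ℝ → ℕ := fun N x => ⌊(N : ℝ) * Int.fract x⌋₊ with hjdef
  set g : ℕ → ℝ → ℝ := fun N x => c N (j N x) with hgdef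
  have hjmem : ∀ N : ℕ, 0 < N → ∀ x, j N x < N ∧
      Int.fract x ∈ Set.Ico ((j N x : ℝ) / N) ((j N x + 1 : ℝ) / N) := by
    intro N hN x
    have hN' : (0 : ℝ) < N := by exact_mod_cast hN
    have h0 := Int.fract_nonneg x
    have h1 := Int.fract_lt_one x
    have a1 : (j N x : ℝ) ≤ N * Int.fract x := Nat.floor_le (by positivity)
    have a2 : N * Int.fract x < (j N x : ℝ) + 1 := Nat.lt_floor_add_one _
    refine ⟨?_, ?_, ?_⟩
    · have : (j N x : ℝ) < N := by nlinarith
      exact_mod_cast this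
    · rw [div_le_iff₀ hN']; linarith
    · rw [lt_div_iff₀ hN']; linarith
  have hle : ∀ N : ℕ, 0 < N → ∀ x, φ x ≤ g N x := by
    intro N hN x
    rw [← hfr x]
    exact le_csSup (hbdd N _) ⟨_, (hjmem N hN x).2, rfl⟩
  have hge : ∀ N : ℕ, 0 < N → ∀ x b, (∀ y, |y - Int.fract x| < 2 / (N : ℝ) → φ y ≤ b) → g N x ≤ b := by
    intro N hN x b hb
    have hN' : (0 : ℝ) < N := by exact_mod_cast hN
    obtain ⟨_, hm1, hm2⟩ := hjmem N hN x
    refine csSup_le ⟨_, ⟨_, (hjmem N hN x).2, rfl⟩⟩ ?_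
    rintro _ ⟨y, hy, rfl⟩
    apply hb
    have e : ((j N x : ℝ) + 1) / N = (j N x : ℝ) / N + 1 / N := by ring
    have e2 : (2 : ℝ) / N = 1 / N + 1 / N := by ring
    have : 0 < 1 / (N : ℝ) := by positivity
    rw [e] at hm2
    have hy1 := hy.1
    have hy2 := hy.2
    rw [e] at hy2
    rw [abs_lt]
    constructor <;> linarith
  have hglim : ∀ x, Tendsto (fun N => g (N + 1) x) atTop (nhds (φ x)) := by
    intro x
    rw [Metric.tendsto_atTop]
    intro e he
    obtain ⟨δ, hδ, hu⟩ := husc (Int.fract x) (e / 2) (by positivity)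
    obtain ⟨N0, hN0⟩ := exists_nat_gt (2 / δ)
    refine ⟨N0, fun N hN => ?_⟩
    have hNN : (N0 : ℝ) ≤ N := by exact_mod_cast hN
    have h1 := hle (N + 1) (Nat.succ_pos _) x
    have h2 := hge (N + 1) (Nat.succ_pos _) x (φ x + e / 2) (fun y hy => by
      rw [← hfr x]
      refine hu y (hy.trans ?_)
      rw [div_lt_iff₀ hδ] at hN0
      push_cast
      rw [div_lt_iff₀ (by positivity)]
      nlinarith)
    rw [Real.dist_eq, abs_lt]
    constructor <;> linarith
  have hgC : ∀ N x, |g (N + 1) x| ≤ C := by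
    intro N x
    rw [abs_le]
    refine ⟨(abs_le.1 (hC x)).1.trans (hle _ (Nat.succ_pos _) x), ?_⟩
    exact hge _ (Nat.succ_pos _) x C (fun y _ => (abs_le.1 (hC y)).2)
  have hgm : ∀ N, Measurable (g N) := by
    intro N
    have h1 : Measurable (j N) := (measurable_fract.const_mul (N : ℝ)).nat_floor
    exact (measurable_of_countable (c N)).comp h1
  have hI : Tendsto (fun N => ∫ x, g (N + 1) x ∂μ) atTop (nhds (∫ x, φ x ∂μ)) := by
    refine tendsto_integral_of_dominated_convergence (fun _ => C)
      (fun N => (hgm _).aestronglyMeasurable) (integrable_const _) ?_ ?_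
    · exact fun N => Eventually.of_forall fun x => hgC N x
    · exact Eventually.of_forall hglim
  obtain ⟨N', hN'⟩ := (hI.eventually (gt_mem_nhds (show ∫ x, φ x ∂μ < ∫ x, φ x ∂μ + ε / 2 by
    linarith))).exists
  set N := N' + 1 with hNdef
  have hNpos : 0 < N := Nat.succ_pos _
  have hNR : (0 : ℝ) < N := by exact_mod_cast hNpos
  -- step function representation
  have hstep : ∀ x, g N x = ∑ i ∈ Finset.range N,
      c N i * (((⌊x - (i : ℝ) / N⌋ : ℤ) : ℝ) - ⌊x - ((i + 1 : ℕ) : ℝ) / N⌋) := by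
    intro x
    obtain ⟨hj1, hj2, hj3⟩ := hjmem N hNpos x
    have hflo : ∀ i : ℕ, i ≤ N → ((⌊x - (i : ℝ) / N⌋ : ℤ) : ℝ) =
        ⌊x⌋ + if i ≤ j N x then 0 else -1 := by
      intro i hi
      have hx := Int.floor_add_fract x
      have hx1 := Int.fract_lt_one x
      have hx0 := Int.fract_nonneg x
      have hi0 : (0 : ℝ) ≤ (i : ℝ) / N := by positivity
      have hi1 : (i : ℝ) / N ≤ 1 := by
        rw [div_le_one hNR]; exact_mod_cast hi
      split_ifs with h
      · have : (i : ℝ) / N ≤ (j N x : ℝ) / N :=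
          div_le_div_of_nonneg_right (by exact_mod_cast h) hNR.le
        have : ⌊x - (i : ℝ) / N⌋ = ⌊x⌋ := by
          rw [Int.floor_eq_iff]; constructor <;> linarith
        rw [this]; simp
      · have : ((j N x : ℝ) + 1) / N ≤ (i : ℝ) / N := by
          apply div_le_div_of_nonneg_right _ hNR.le
          have : j N x + 1 ≤ i := by omega
          exact_mod_cast this
        have : ⌊x - (i : ℝ) / N⌋ = ⌊x⌋ - 1 := by
          rw [Int.floor_eq_iff]; push_cast; constructor <;> linarith
        rw [this]; push_cast; ring
    rw [Finset.sum_eq_single (j N x)]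
    · rw [hflo _ hj1.le, hflo _ hj1]
      simp [hgdef]
    · intro i hi hne
      have hi' := Finset.mem_range.1 hi
      rw [hflo _ hi'.le, hflo _ hi']
      by_cases h : i ≤ j N x
      · have h' : i + 1 ≤ j N x := by omega
        simp [h, h']
      · have h' : ¬ (i + 1 ≤ j N x) := by omega
        simp [h, h']
    · intro h
      exact absurd (Finset.mem_range.2 hj1) h
  have hgint : ∫ x, g N x ∂μ =
      ∑ i ∈ Finset.range N, c N i * (F (((i + 1 : ℕ) : ℝ) / N) - F ((i : ℝ) / N)) := by
    simp only [hstep]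
    rw [integral_finsetSum]
    swap
    · exact fun i _ => ((hint _).sub (hint _)).const_mul _
    refine Finset.sum_congr rfl fun i _ => ?_
    rw [integral_const_mul, integral_sub (hint _) (hint _), hFd, hFd]
    ring
  set S := ∑ i ∈ Finset.range N, |c N i| with hS
  have hS0 : 0 ≤ S := Finset.sum_nonneg fun _ _ => abs_nonneg _
  obtain ⟨J, hJ⟩ := visits H F ρ hirr hF hF1 hFH (ε / (4 * (S + 1))) (by positivity)
  have hbound : ∀ (n : ℕ) θ, ∑ k ∈ Finset.range n, g N (H^[k] θ) ≤
      n * ∫ x, g N x ∂μ + S * (J + n * (ε / (4 * (S + 1)))) := by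
    intro n θ
    simp only [hstep (H^[_] θ)]
    rw [Finset.sum_comm, hgint, Finset.mul_sum, hS, Finset.sum_mul, ← Finset.sum_add_distrib]
    refine Finset.sum_le_sum fun i _ => ?_
    rw [← Finset.mul_sum]
    have h1 := hJ n θ ((i : ℝ) / N) (((i + 1 : ℕ) : ℝ) / N)
    rw [← hS]
    have h2 := le_abs_self (c N i * (∑ k ∈ Finset.range n,
      (((⌊H^[k] θ - (i : ℝ) / N⌋ : ℤ) : ℝ) - ⌊H^[k] θ - ((i + 1 : ℕ) : ℝ) / N⌋) -
        n * (F (((i + 1 : ℕ) : ℝ) / N) - F ((i : ℝ) / N))))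
    rw [abs_mul] at h2
    have h3 := mul_le_mul_of_nonneg_left h1 (abs_nonneg (c N i))
    linarith
  obtain ⟨n0, hn0⟩ := exists_nat_gt (4 * (S * J) / ε)
  refine ⟨n0, fun n hn θ => ?_⟩
  have hnn : (n0 : ℝ) ≤ n := by exact_mod_cast hn
  have hsum := Finset.sum_le_sum (s := Finset.range n) (fun k _ => hle N hNpos (H^[k] θ))
  have hb := hbound n θ
  have h4 : S * J ≤ n * (ε / 4) := by
    rw [div_lt_iff₀ hε] at hn0
    nlinarith
  have h5 : S * (n * (ε / (4 * (S + 1)))) ≤ n * (ε / 4) := by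
    have : S * (n * (ε / (4 * (S + 1)))) = n * (ε / 4) * (S / (S + 1)) := by field_simp
    rw [this]
    have h6 : S / (S + 1) ≤ 1 := by rw [div_le_one (by linarith)]; linarith
    exact mul_le_of_le_one_right (by positivity) h6
  have h7 : (n : ℝ) * ∫ x, g N x ∂μ ≤ n * (∫ x, φ x ∂μ + ε / 2) :=
    mul_le_mul_of_nonneg_left hN'.le (by positivity)
  linarith

/-- For a bi-Lipschitz orientation-preserving circle homeomorphism (given by
its lift `H`) with irrational rotation number and unique invariant measure `μ`,
if `H` is C¹-regular `μ`-a.e. (upper and lower Dini derivatives agree), then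
`(1/n) log((Hⁿ)'_±) → 0` uniformly. -/
theorem stmt15 (H : ℝ → ℝ) (L : ℝ) (hL : 1 ≤ L)
    (hmono : StrictMono H) (hlift : ∀ t, H (t + 1) = H t + 1)
    (hlip : ∀ s t, |H s - H t| ≤ L * |s - t|)
    (hlip' : ∀ s t, |s - t| ≤ L * |H s - H t|)
    (ρ : ℝ) (hirr : Irrational ρ)
    (hρ : ∀ t, Tendsto (fun n : ℕ => (H^[n] t - t) / n) atTop (nhds ρ))
    (μ : Measure ℝ) [IsProbabilityMeasure μ] (hsupp : μ (Set.Ico (0 : ℝ) 1) = 1)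
    (hinvμ : ∀ A : Set ℝ, MeasurableSet A →
      μ ((fun t => Int.fract (H t)) ⁻¹' A) = μ A)
    (hreg : ∀ᵐ θ ∂μ, diniSup H θ = diniInf H θ) :
    TendstoUniformly
      (fun n : ℕ => fun θ : ℝ => (1 / (n : ℝ)) * Real.log (diniSup (H^[n]) θ))
      (fun _ => 0) atTop ∧
    TendstoUniformly
      (fun n : ℕ => fun θ : ℝ => (1 / (n : ℝ)) * Real.log (diniInf (H^[n]) θ))
      (fun _ => 0) atTop := by
  have hL0 : 0 < L := by linarith
  have hm : 0 < L⁻¹ := by positivity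
  have hQ : QB L⁻¹ L H := by
    rintro ⟨s, t⟩ hne
    simp only at hne ⊢
    have hst : 0 < |s - t| := abs_pos.2 (sub_ne_zero.2 hne)
    have habs : (H s - H t) / (s - t) = |H s - H t| / |s - t| := by
      rw [← abs_div, abs_of_nonneg]
      rcases lt_or_gt_of_ne hne with h | h
      · have := hmono h
        exact div_nonneg_of_nonpos (by linarith) (by linarith)
      · have := hmono h
        exact div_nonneg (by linarith) (by linarith)
    rw [habs]
    constructor
    · rw [le_div_iff₀ hst, inv_mul_le_iff₀ hL0]
      exact hlip' s t
    · rw [div_le_iff₀ hst]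
      exact hlip s t
  obtain ⟨F, hFd, hint, hF, hF1, hFH⟩ :=
    semiconj H hmono (hQ.cont hm) hlift ρ hρ μ hsupp hinvμ
  have hIpos : ∀ x, 0 < diniInf H x := fun x => lt_of_lt_of_le hm (hQ.le_inf' x)
  have hSpos : ∀ x, 0 < diniSup H x := fun x => lt_of_lt_of_le (hIpos x) (hQ.inf_le_sup x)
  set φ : ℝ → ℝ := fun x => Real.log (diniSup H x) with hφ
  set ψ : ℝ → ℝ := fun x => -Real.log (diniInf H x) with hψ
  have hbd : ∀ d : ℝ, L⁻¹ ≤ d → d ≤ L → |Real.log d| ≤ Real.log L := by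
    intro d h1 h2
    rw [abs_le]
    constructor
    · rw [← Real.log_inv]; exact Real.log_le_log hm h1
    · exact Real.log_le_log (lt_of_lt_of_le hm h1) h2
  have hup : ∀ ε > 0, ∃ N : ℕ, ∀ n ≥ N, ∀ θ,
      ∑ k ∈ Finset.range n, φ (H^[k] θ) ≤ n * (∫ x, φ x ∂μ + ε) := by
    intro ε hε
    refine birkhoff_usc H F ρ hirr μ hFd hint hF hF1 hFH φ ?_ (Real.log L) ?_ ?_ ε hε
    · intro x; simp only [hφ, diniSup_periodic hlift hQ]
    · intro x
      exact hbd _ ((hQ.le_inf' x).trans (hQ.inf_le_sup x)) (hQ.sup_le' x)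
    · intro x e he
      have h1 : 1 < Real.exp e := Real.one_lt_exp_iff.2 he
      obtain ⟨δ, hδ, hh⟩ := hQ.sup_usc (x := x) (c := diniSup H x * Real.exp e)
        (lt_mul_of_one_lt_right (hSpos x) h1)
      refine ⟨δ, hδ, fun y hy => ?_⟩
      have := Real.log_le_log (hSpos y) (hh y hy)
      rwa [Real.log_mul (hSpos x).ne' (Real.exp_ne_zero e), Real.log_exp] at this
  have hlo : ∀ ε > 0, ∃ N : ℕ, ∀ n ≥ N, ∀ θ,
      ∑ k ∈ Finset.range n, ψ (H^[k] θ) ≤ n * (∫ x, ψ x ∂μ + ε) := by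
    intro ε hε
    refine birkhoff_usc H F ρ hirr μ hFd hint hF hF1 hFH ψ ?_ (Real.log L) ?_ ?_ ε hε
    · intro x; simp only [hψ, diniInf_periodic hlift hQ]
    · intro x
      simp only [hψ, abs_neg]
      exact hbd _ (hQ.le_inf' x) ((hQ.inf_le_sup x).trans (hQ.sup_le' x))
    · intro x e he
      have h1 : Real.exp (-e) < 1 := Real.exp_lt_one_iff.2 (by linarith)
      obtain ⟨δ, hδ, hh⟩ := hQ.inf_lsc (x := x) (c := diniInf H x * Real.exp (-e))
        (mul_lt_of_lt_one_right (hIpos x) h1)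
      refine ⟨δ, hδ, fun y hy => ?_⟩
      have := Real.log_le_log (mul_pos (hIpos x) (Real.exp_pos _)) (hh y hy)
      rw [Real.log_mul (hIpos x).ne' (Real.exp_ne_zero _), Real.log_exp] at this
      simp only [hψ]
      linarith
  set lam := ∫ x, φ x ∂μ with hlam
  have hψint : ∫ x, ψ x ∂μ = -lam := by
    rw [hlam, ← integral_neg]
    refine integral_congr_ae ?_
    filter_upwards [hreg] with x hx
    simp only [hφ, hψ, hx]
  have hup' : ∀ ε > 0, ∃ N : ℕ, ∀ n ≥ N, ∀ θ,
      Real.log (diniSup (H^[n]) θ) ≤ n * (lam + ε) := by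
    intro ε hε
    obtain ⟨N, hN⟩ := hup ε hε
    exact ⟨N, fun n hn θ => (hQ.log_sup_iter hm n θ).trans (hN n hn θ)⟩
  have hlo' : ∀ ε > 0, ∃ N : ℕ, ∀ n ≥ N, ∀ θ,
      n * (lam - ε) ≤ Real.log (diniInf (H^[n]) θ) := by
    intro ε hε
    obtain ⟨N, hN⟩ := hlo ε hε
    refine ⟨N, fun n hn θ => ?_⟩
    have h1 := hQ.log_inf_iter hm n θ
    have h2 := hN n hn θ
    rw [hψint] at h2
    simp only [hψ, Finset.sum_neg_distrib] at h2
    linarith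
  have hpI : ∀ (n : ℕ) x, 0 < diniInf (H^[n]) x := fun n x =>
    lt_of_lt_of_le (pow_pos hm n) ((hQ.iter hm n).le_inf' x)
  have hpS : ∀ (n : ℕ) x, 0 < diniSup (H^[n]) x := fun n x =>
    lt_of_lt_of_le (hpI n x) ((hQ.iter hm n).inf_le_sup x)
  have hdeg : ∀ (n : ℕ), H^[n] 1 - H^[n] 0 = 1 := by
    intro n
    have : ∀ t, H^[n] (t + 1) = H^[n] t + 1 := by
      induction n with
      | zero => simp
      | succ n ih => intro t; rw [Function.iterate_succ_apply', ih, hlift,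
          Function.iterate_succ_apply']
    have := this 0
    rw [zero_add] at this
    linarith
  have hlam0 : lam = 0 := by
    rcases lt_trichotomy lam 0 with h | h | h
    · exfalso
      obtain ⟨N, hN⟩ := hup' (-lam / 2) (by linarith)
      have h1 := (hQ.iter hm (N + 1)).global_sup (pow_pos hm _)
        (c := Real.exp (((N + 1 : ℕ) : ℝ) * (lam + -lam / 2))) (fun x => by
          rw [← Real.log_le_iff_le_exp (hpS _ x)]
          exact hN (N + 1) (by omega) x)
      rw [hdeg] at h1
      have h2 : Real.exp (((N + 1 : ℕ) : ℝ) * (lam + -lam / 2)) < 1 := by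
        rw [Real.exp_lt_one_iff]
        apply mul_neg_of_pos_of_neg
        · positivity
        · linarith
      linarith
    · exact h
    · exfalso
      obtain ⟨N, hN⟩ := hlo' (lam / 2) (by linarith)
      have h1 := (hQ.iter hm (N + 1)).global_inf (pow_pos hm _)
        (c := Real.exp (((N + 1 : ℕ) : ℝ) * (lam - lam / 2))) (fun x => by
          rw [← Real.le_log_iff_exp_le (hpI _ x)]
          exact hN (N + 1) (by omega) x)
      rw [hdeg] at h1
      have h2 : 1 < Real.exp (((N + 1 : ℕ) : ℝ) * (lam - lam / 2)) := by
        rw [Real.one_lt_exp_iff]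
        apply mul_pos
        · positivity
        · linarith
      linarith
  rw [hlam0] at hup' hlo'
  have hfin : ∀ ε > 0, ∃ N : ℕ, ∀ n ≥ N, ∀ θ d,
      diniInf (H^[n]) θ ≤ d → d ≤ diniSup (H^[n]) θ → dist 0 ((1 / (n : ℝ)) * Real.log d) < ε := by
    intro ε hε
    obtain ⟨N1, h1⟩ := hup' (ε / 2) (by positivity)
    obtain ⟨N2, h2⟩ := hlo' (ε / 2) (by positivity)
    refine ⟨N1 + N2 + 1, fun n hn θ d hd1 hd2 => ?_⟩
    have hn0 : (0 : ℝ) < n := by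
      have : 0 < n := by omega
      exact_mod_cast this
    have a1 := h1 n (by omega) θ
    have a2 := h2 n (by omega) θ
    have hd0 : 0 < d := lt_of_lt_of_le (hpI n θ) hd1
    have b1 := Real.log_le_log hd0 hd2
    have b2 := Real.log_le_log (hpI n θ) hd1
    rw [Real.dist_eq, zero_sub, abs_neg, one_div, inv_mul_eq_div, abs_lt]
    constructor
    · rw [lt_div_iff₀ hn0]; nlinarith
    · rw [div_lt_iff₀ hn0]; nlinarith
  constructor
  · rw [Metric.tendstoUniformly_iff]
    intro ε hε
    obtain ⟨N, hN⟩ := hfin ε hε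
    filter_upwards [eventually_ge_atTop N] with n hn θ
    exact hN n hn θ _ ((hQ.iter hm n).inf_le_sup θ) le_rfl
  · rw [Metric.tendstoUniformly_iff]
    intro ε hε
    obtain ⟨N, hN⟩ := hfin ε hε
    filter_upwards [eventually_ge_atTop N] with n hn θ
    exact hN n hn θ _ le_rfl ((hQ.iter hm n).inf_le_sup θ)
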